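/- arXiv:1909.00495 — 3 statements merged into one kernel-verified Lean document; each statement's English description precedes it below -/
import Mathlib

section
/- Let n ≥ 2 and d = n−1, and let f ∈ 𝒯' be a periodic distribution with zero average, i.e. f̂(0) = 0. Then f = Σ_{A∈Gr(n−1,n)} R_{n−1,A} f, with the series converging in the sense of distributions; that is, a compactly supported (periodized) object with zero mean equals the sum of its (n−1)-plane Radon transform data over all rational hyperplane directions. -/
/-!
Setting: the flat torus 𝕋ⁿ = ℝⁿ/ℤⁿ and its d-plane Radon transform.

* Periodic distributions 𝒯' are modeled, via the structure theorem, by their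
  Fourier coefficient sequences `ℤⁿ → ℂ` of at most polynomial growth (`PDist`).
* `Gr d n` is the Grassmannian of d-dimensional subspaces of ℚⁿ.
* The d-plane Radon transform is encoded on the Fourier side by the Fourier
  slice identity `(R_{d,A} f)^(k) = f̂(k)` if `k ⊥ A` and `0` otherwise (`radonC`).
* `hsNormSq s c = Σ_k ⟨k⟩^{2s} |c k|²` is the squared H^s(𝕋ⁿ) norm (in ℝ≥0∞),
  `dataNormSq s w g = Σ_A Σ_k ⟨k⟩^{2s} w(k,A)² |ĝ(k,A)|²` is the squared
  L_s^{2,2}(X_{d,n}; w) norm, `hsNorm`/`dataNorm` are their square roots.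
* `Wk w k = Σ_{A ∈ Ω_k} w(k,A)²` and `radonStar` is the adjoint
  `(R_d^* g)^(k) = Σ_{A ∈ Ω_k} w(k,A)² ĝ(k,A)`.
-/

open scoped ENNReal BigOperators
open MeasureTheory Classical Filter

noncomputable section

abbrev Zn (n : ℕ) := Fin n → ℤ
abbrev Tn (n : ℕ) := Fin n → AddCircle (1 : ℝ)

/-- Japanese bracket ⟨k⟩ = (1+|k|²)^{1/2}. -/
def jap {n : ℕ} (k : Zn n) : ℝ := Real.sqrt (1 + ∑ i, ((k i : ℝ))^2)

/-- Periodic distributions on 𝕋ⁿ, modeled via their Fourier coefficients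
(structure theorem: 𝒯' ≅ sequences of at most polynomial growth). -/
structure PDist (n : ℕ) where
  coef : Zn n → ℂ
  growth : ∃ C N : ℝ, 0 < C ∧ ∀ k, ‖coef k‖ ≤ C * jap k ^ N

/-- Grassmannian of d-dimensional subspaces of ℚⁿ. -/
def Gr (d n : ℕ) := {A : Submodule ℚ (Fin n → ℚ) // Module.finrank ℚ A = d}

/-- `k ⊥ A`. -/
def perp {d n : ℕ} (k : Zn n) (A : Gr d n) : Prop :=
  ∀ v ∈ A.1, ∑ i, (k i : ℚ) * v i = 0

/-- A weight `w : ℤⁿ × Gr(d,n) → (0,∞)` with at most polynomial decay in each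
variable `A`. -/
def IsWeight {d n : ℕ} (w : Zn n → Gr d n → ℝ) : Prop :=
  (∀ k A, 0 < w k A) ∧ ∀ A : Gr d n, ∃ C N : ℝ, 0 < C ∧ ∀ k, C * jap k ^ (-N) ≤ w k A

/-- Fourier-slice definition of the d-plane Radon transform `R_{d,A}`
on Fourier coefficient sequences. -/
def radonC {d n : ℕ} (A : Gr d n) (c : Zn n → ℂ) : Zn n → ℂ :=
  fun k => if perp k A then c k else 0

/-- The d-plane Radon transform `R_{d,A}` on periodic distributions. -/
def radonD {d n : ℕ} (A : Gr d n) (f : PDist n) : PDist n :=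
  ⟨radonC A f.coef, by
    obtain ⟨C, N, hC, h⟩ := f.growth
    refine ⟨C, N, hC, fun k => ?_⟩
    by_cases hk : perp k A
    · simpa [radonC, hk] using h k
    · simp only [radonC, hk, if_false, norm_zero]
      have h1 : 0 ≤ jap k ^ N := Real.rpow_nonneg (Real.sqrt_nonneg _) N
      positivity⟩

/-- Squared H^s(𝕋ⁿ) norm `Σ_k ⟨k⟩^{2s}|c k|²` (possibly infinite). -/
def hsNormSq {n : ℕ} (s : ℝ) (c : Zn n → ℂ) : ℝ≥0∞ :=
  ∑' k : Zn n, ENNReal.ofReal (jap k ^ (2*s) * ‖c k‖^2)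

/-- H^s(𝕋ⁿ) norm (possibly infinite). -/
def hsNorm {n : ℕ} (s : ℝ) (c : Zn n → ℂ) : ℝ≥0∞ := hsNormSq s c ^ (1/2 : ℝ)

/-- Squared L_s^{2,2}(X_{d,n}; w) norm (possibly infinite). -/
def dataNormSq {d n : ℕ} (s : ℝ) (w : Zn n → Gr d n → ℝ) (g : Gr d n → Zn n → ℂ) : ℝ≥0∞ :=
  ∑' A : Gr d n, ∑' k : Zn n, ENNReal.ofReal (jap k ^ (2*s) * (w k A)^2 * ‖g A k‖^2)

/-- L_s^{2,2}(X_{d,n}; w) norm (possibly infinite). -/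
def dataNorm {d n : ℕ} (s : ℝ) (w : Zn n → Gr d n → ℝ) (g : Gr d n → Zn n → ℂ) : ℝ≥0∞ :=
  dataNormSq s w g ^ (1/2 : ℝ)

/-- `W_k = Σ_{A ∈ Ω_k} w(k,A)²`. -/
def Wk {d n : ℕ} (w : Zn n → Gr d n → ℝ) (k : Zn n) : ℝ :=
  ∑' A : {A : Gr d n // perp k A}, (w k A.1)^2

/-- The adjoint `R_d^*`: `(R_d^* g)^(k) = Σ_{A ∈ Ω_k} w(k,A)² ĝ(k,A)`. -/
def radonStar {d n : ℕ} (w : Zn n → Gr d n → ℝ) (g : Gr d n → Zn n → ℂ) : Zn n → ℂ :=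
  fun k => ∑' A : {A : Gr d n // perp k A}, ((w k A.1 : ℝ) : ℂ)^2 * g A.1 k

/-- Test functions `C^∞(𝕋ⁿ)`, modeled via their rapidly decaying Fourier
coefficient sequences. -/
structure TestFun (n : ℕ) where
  coef : Zn n → ℂ
  decay : ∀ N : ℝ, ∃ C : ℝ, 0 < C ∧ ∀ k, ‖coef k‖ ≤ C * jap k ^ (-N)

/-- Duality pairing `(f, h) = Σ_k f̂(k) ĥ(−k)` between `𝒯'` and `C^∞(𝕋ⁿ)`. -/
def pairing {n : ℕ} (c : Zn n → ℂ) (h : TestFun n) : ℂ :=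
  ∑' k : Zn n, c k * h.coef (-k)

/-!
For `k ≠ 0` the only hyperplane `A` with `k ⊥ A` is `k^⊥`, so the sets of nonzero frequencies
`{k | k ⊥ A}`, `A ∈ Gr(n-1, n)`, partition `ℤⁿ ∖ {0}`. Testing `R_{n-1,A} f` against `h` selects the
terms of `Σ_k f̂(k) ĥ(-k)` whose frequency lies in the block of `A`, and the term `k = 0`, which every
`A` selects, vanishes. As the whole series converges absolutely, it may be summed block by block.
-/

theorem hasSum_tsum_ite_of_existsUnique {ι κ E : Type*} [AddCommGroup E] [UniformSpace E]
    [IsUniformAddGroup E] [CompleteSpace E] [T2Space E] {g : κ → E} {r : κ → ι → Prop}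
    [∀ k i, Decidable (r k i)] (hg : Summable g) (hr : ∀ k ∈ Function.support g, ∃! i, r k i) :
    HasSum (fun i => ∑' k, if r k i then g k else 0) (∑' k, g k) := by
  choose block r_block block_unique using fun k : Function.support g => hr k k.2
  have r_iff (k : Function.support g) (i : ι) : r k i ↔ block k = i :=
    ⟨fun h => (block_unique k i h).symm, fun h => h ▸ r_block k⟩
  have tsum_fiber (i : ι) :
      ∑' k : block ⁻¹' {i}, g k.1 = ∑' k, if r k i then g k else 0 := by
    have support_subset :
        (Function.support fun k => if r k i then g k else 0) ⊆ Function.support g :=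
      fun k hk hgk => hk (by simp [hgk])
    calc ∑' k : block ⁻¹' {i}, g k.1
        = ∑' k : Function.support g, (block ⁻¹' {i}).indicator (fun k => g k) k :=
          tsum_subtype (block ⁻¹' {i}) fun k => g k
      _ = ∑' k : Function.support g, if r k i then g k else 0 := by
          simp only [Set.indicator_apply, Set.mem_preimage, Set.mem_singleton_iff, r_iff]
      _ = ∑' k, if r k i then g k else 0 := tsum_subtype_eq_of_support_subset support_subset
  simpa only [tsum_fiber, Function.comp_apply] using
    (hasSum_subtype_support.mpr hg.hasSum).tsum_fiberwise block

section Frequencies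

theorem summable_norm_rpow_pi_int {ι : Type*} [Fintype ι] {r : ℝ} (hr : r < -Fintype.card ι) :
    Summable fun k : ι → ℤ => ‖k‖ ^ r := by
  let b := (Pi.basisFun ℝ ι).restrictScalars ℤ
  have norm_equivFun_symm (k : ι → ℤ) : ‖b.equivFun.symm k‖ = ‖k‖ := by
    have coe_eq : (b.equivFun.symm k : ι → ℝ) = fun i => (k i : ℝ) := by
      ext i
      simp [b, Module.Basis.equivFun_symm_apply, Pi.single_apply]
    rw [Submodule.coe_norm, coe_eq]
    rfl
  have summable_span := ZLattice.summable_norm_rpow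
    (Submodule.span ℤ (Set.range (Pi.basisFun ℝ ι))) r
    (by rwa [Module.finrank_eq_card_basis b])
  simpa only [Function.comp_def, LinearEquiv.coe_toEquiv, norm_equivFun_symm] using
    b.equivFun.symm.toEquiv.summable_iff.mpr summable_span

variable {n : ℕ}

theorem jap_pos (k : Zn n) : 0 < jap k :=
  Real.sqrt_pos.mpr (by positivity)

theorem jap_neg (k : Zn n) : jap (-k) = jap k := by
  simp [jap]

theorem norm_le_jap (k : Zn n) : ‖k‖ ≤ jap k := by
  refine (pi_norm_le_iff_of_nonneg (jap_pos k).le).mpr fun i => ?_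
  rw [Int.norm_eq_abs]
  refine Real.abs_le_sqrt ?_
  have sq_le_sum := Finset.single_le_sum (f := fun i => (k i : ℝ) ^ 2)
    (fun _ _ => sq_nonneg _) (Finset.mem_univ i)
  linarith

theorem summable_jap_rpow {r : ℝ} (hr : r < -n) : Summable fun k : Zn n => jap k ^ r := by
  refine (summable_norm_rpow_pi_int (by simpa using hr)).of_norm_bounded_eventually ?_
  filter_upwards [(Set.finite_singleton (0 : Zn n)).compl_mem_cofinite] with k hk
  rw [Real.norm_of_nonneg (Real.rpow_nonneg (jap_pos k).le r)]
  have hr_nonpos : r ≤ 0 := hr.le.trans (by simp)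
  exact Real.rpow_le_rpow_of_nonpos (norm_pos_iff.mpr hk) (norm_le_jap k) hr_nonpos

end Frequencies

section Pairing

variable {d n : ℕ}

theorem summable_coef_mul_coef_neg (f : PDist n) (h : TestFun n) :
    Summable fun k => f.coef k * h.coef (-k) := by
  obtain ⟨C, N, hC, f_growth⟩ := f.growth
  obtain ⟨C', -, h_decay⟩ := h.decay (N + (n + 1))
  have summable_bound : Summable fun k : Zn n => C * C' * jap k ^ (-(n + 1) : ℝ) :=
    (summable_jap_rpow (by linarith)).mul_left _
  refine summable_bound.of_norm_bounded fun k => ?_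
  have h_decay_neg : ‖h.coef (-k)‖ ≤ C' * jap k ^ (-(N + (n + 1))) := jap_neg k ▸ h_decay (-k)
  have jap_rpow_nonneg : 0 ≤ jap k ^ N := Real.rpow_nonneg (jap_pos k).le N
  calc ‖f.coef k * h.coef (-k)‖
      = ‖f.coef k‖ * ‖h.coef (-k)‖ := norm_mul _ _
    _ ≤ C * jap k ^ N * (C' * jap k ^ (-(N + (n + 1)))) := by gcongr; exact f_growth k
    _ = C * C' * (jap k ^ N * jap k ^ (-(N + (n + 1)))) := by ring
    _ = C * C' * jap k ^ (-(n + 1) : ℝ) := by rw [← Real.rpow_add (jap_pos k)]; congr 2; ring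

theorem pairing_radonC (A : Gr d n) (c : Zn n → ℂ) (h : TestFun n) :
    pairing (radonC A c) h = ∑' k, if perp k A then c k * h.coef (-k) else 0 := by
  simp only [pairing, radonC, ite_mul, zero_mul]

end Pairing

section Hyperplanes

variable {d n : ℕ}

/-- The hyperplane `k^⊥` of `ℚⁿ`, as the kernel of the functional `v ↦ k · v`; it is all of `ℚⁿ`
when `k = 0`. -/
def orthogonalHyperplane (k : Zn n) : Submodule ℚ (Fin n → ℚ) :=
  LinearMap.ker (dotProductEquiv ℚ (Fin n) fun i => (k i : ℚ))

theorem perp_iff_le_orthogonalHyperplane {k : Zn n} {A : Gr d n} :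
    perp k A ↔ A.1 ≤ orthogonalHyperplane k :=
  Iff.rfl

theorem finrank_orthogonalHyperplane {k : Zn n} (hk : k ≠ 0) :
    Module.finrank ℚ (orthogonalHyperplane k) = n - 1 := by
  have functional_ne_zero : dotProductEquiv ℚ (Fin n) (fun i => (k i : ℚ)) ≠ 0 := by
    simpa [funext_iff] using hk
  have finrank_add_one := Module.Dual.finrank_ker_add_one_of_ne_zero functional_ne_zero
  rw [Module.finrank_fin_fun] at finrank_add_one
  exact Nat.eq_sub_of_add_eq finrank_add_one

theorem existsUnique_perp {k : Zn n} (hk : k ≠ 0) : ∃! A : Gr (n - 1) n, perp k A := by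
  refine ⟨⟨orthogonalHyperplane k, finrank_orthogonalHyperplane hk⟩,
    perp_iff_le_orthogonalHyperplane.mpr le_rfl, fun A hA => Subtype.ext ?_⟩
  exact Submodule.eq_of_le_of_finrank_eq (perp_iff_le_orthogonalHyperplane.mp hA)
    (A.2.trans (finrank_orthogonalHyperplane hk).symm)

end Hyperplanes

/-- A zero-average distribution is the sum of its
`(n−1)`-plane Radon transform data.
If `f ∈ 𝒯'` has zero average, `f̂(0) = 0`, then
`f = Σ_{A ∈ Gr(n−1,n)} R_{n−1,A} f` with the series converging in the sense of
distributions, i.e. tested against every `h ∈ C^∞(𝕋ⁿ)`. -/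
theorem statement6 {n : ℕ} (hn : 2 ≤ n)
    (f : PDist n) (hf0 : f.coef 0 = 0) :
    ∀ h : TestFun n,
      HasSum (fun A : Gr (n - 1) n => pairing (radonC A f.coef) h) (pairing f.coef h) := by
  intro h
  have existsUnique_block : ∀ k ∈ Function.support fun k => f.coef k * h.coef (-k),
      ∃! A : Gr (n - 1) n, perp k A := by
    intro k hk
    refine existsUnique_perp ?_
    rintro rfl
    exact left_ne_zero_of_mul hk hf0
  simp only [pairing_radonC]
  exact hasSum_tsum_ite_of_existsUnique (summable_coef_mul_coef_neg f h) existsUnique_block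
end
end

section
/- Let n ≥ 2 and 1 ≤ d ≤ n−1 be integers and let w be a weight such that there exist c_w, C_w > 0 with c_w² ≤ W_k ≤ C_w² for every k ∈ ℤ^n. Let r, t, s, δ ∈ ℝ with 2s + t ≥ r, δ ≥ 0 and s > 0, and let f ∈ H^{r+δ}(𝕋^n). Then the Tikhonov-regularized reconstruction P_{w,s}^α R_d^* is a regularization strategy: with the choice α(ε) = √ε one has lim_{ε→0} sup{ ‖P_{w,s}^{α(ε)} R_d^*(R_d f + g) − f‖_{H^r(𝕋^n)} : g ∈ L_t^{2,2}(X_{d,n};w), ‖g‖_{L_t^{2,2}(X_{d,n};w)} ≤ ε } = 0. -/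
/-!
Setting: the flat torus 𝕋ⁿ = ℝⁿ/ℤⁿ and its d-plane Radon transform.

* Periodic distributions 𝒯' are modeled, via the structure theorem, by their
  Fourier coefficient sequences `ℤⁿ → ℂ` of at most polynomial growth (`PDist`).
* `Gr d n` is the Grassmannian of d-dimensional subspaces of ℚⁿ.
* The d-plane Radon transform is encoded on the Fourier side by the Fourier
  slice identity `(R_{d,A} f)^(k) = f̂(k)` if `k ⊥ A` and `0` otherwise (`radonC`).
* `hsNormSq s c = Σ_k ⟨k⟩^{2s} |c k|²` is the squared H^s(𝕋ⁿ) norm (in ℝ≥0∞),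
  `dataNormSq s w g = Σ_A Σ_k ⟨k⟩^{2s} w(k,A)² |ĝ(k,A)|²` is the squared
  L_s^{2,2}(X_{d,n}; w) norm, `hsNorm`/`dataNorm` are their square roots.
* `Wk w k = Σ_{A ∈ Ω_k} w(k,A)²` and `radonStar` is the adjoint
  `(R_d^* g)^(k) = Σ_{A ∈ Ω_k} w(k,A)² ĝ(k,A)`.
-/

open scoped ENNReal BigOperators
open MeasureTheory Classical Filter

noncomputable section

/-- Symbol of the Fourier multiplier `P_{w,z}^α`:
`p_{w,z}^α(k) = 1/(W_k + α⟨k⟩^{2z})`. -/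
def pSymb {d n : ℕ} (w : Zn n → Gr d n → ℝ) (z α : ℝ) (k : Zn n) : ℝ :=
  (Wk w k + α * jap k ^ (2*z))⁻¹

/-- The Tikhonov-regularized reconstruction `P_{w,z}^α R_d^* g`. -/
def tikhRecon {d n : ℕ} (w : Zn n → Gr d n → ℝ) (z α : ℝ)
    (g : Gr d n → Zn n → ℂ) : Zn n → ℂ :=
  fun k => ((pSymb w z α k : ℝ) : ℂ) * radonStar w g k

/-!
With exact data the reconstruction multiplies `f̂(k)` by `W_k / (W_k + α⟨k⟩^{2s})`, so the error
splits into a bias `α⟨k⟩^{2s} / (W_k + α⟨k⟩^{2s}) · f̂(k)` and the propagated noise `P R_d^* g`.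
The bias factor lies in `[0, 1]` and tends to `0` with `α` at each fixed `k`, so dominated
convergence kills the bias in `H^r`, though without a rate. For the noise, Cauchy–Schwarz over
`Ω_k` gives `|R_d^* g(k)|² ≤ W_k ∑_A w(k,A)² |ĝ(k,A)|²`, and the symbol of `P` is at most
`(α⟨k⟩^{2s})⁻¹`, which absorbs the `2s ≥ r - t` derivatives; the noise is thus `O(ε/α)`. Any
choice with `α(ε) → 0` and `ε/α(ε) → 0` therefore works.
-/

open scoped Topology

section CauchySchwarz

variable {ι : Type*}

theorem tsum_mul_le_Lp_mul_Lq (f g : ι → ℝ≥0∞) {p q : ℝ} (hpq : p.HolderConjugate q) :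
    ∑' i, f i * g i ≤ (∑' i, f i ^ p) ^ (1 / p) * (∑' i, g i ^ q) ^ (1 / q) := by
  rw [ENNReal.tsum_eq_iSup_sum]
  refine iSup_le fun S => (ENNReal.inner_le_Lp_mul_Lq S f g hpq).trans ?_
  gcongr
  · exact hpq.one_div_nonneg
  · exact ENNReal.sum_le_tsum S
  · exact hpq.symm.one_div_nonneg
  · exact ENNReal.sum_le_tsum S

theorem sq_tsum_mul_le_tsum_sq_mul_tsum_sq (f g : ι → ℝ≥0∞) :
    (∑' i, f i * g i) ^ 2 ≤ (∑' i, f i ^ 2) * ∑' i, g i ^ 2 := by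
  have holder := tsum_mul_le_Lp_mul_Lq f g Real.HolderConjugate.two_two
  simp only [ENNReal.rpow_two] at holder
  calc (∑' i, f i * g i) ^ 2
      ≤ ((∑' i, f i ^ 2) ^ (1 / 2 : ℝ) * (∑' i, g i ^ 2) ^ (1 / 2 : ℝ)) ^ 2 := by gcongr
    _ = (∑' i, f i ^ 2) * ∑' i, g i ^ 2 := by
      simp only [mul_pow, ← ENNReal.rpow_two, ← ENNReal.rpow_mul]
      norm_num

end CauchySchwarz

section Sobolev

variable {n : ℕ}

theorem one_le_jap (k : Zn n) : 1 ≤ jap k :=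
  Real.one_le_sqrt.2 <| le_add_of_nonneg_right <| Finset.sum_nonneg fun _ _ => sq_nonneg _

theorem jap_rpow_pos (k : Zn n) (x : ℝ) : 0 < jap k ^ x :=
  Real.rpow_pos_of_pos (zero_lt_one.trans_le (one_le_jap k)) x

theorem hsNormSq_eq_tsum_enorm (s : ℝ) (c : Zn n → ℂ) :
    hsNormSq s c = ∑' k, ENNReal.ofReal (jap k ^ (2 * s)) * ‖c k‖ₑ ^ 2 := by
  refine tsum_congr fun k => ?_
  rw [ENNReal.ofReal_mul (jap_rpow_pos k _).le, ENNReal.ofReal_pow (norm_nonneg _), ofReal_norm]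

theorem hsNormSq_mono {r s : ℝ} (hrs : r ≤ s) (c : Zn n → ℂ) : hsNormSq r c ≤ hsNormSq s c := by
  unfold hsNormSq
  gcongr with k
  exact one_le_jap k

theorem hsNormSq_sub_le (s : ℝ) (a b : Zn n → ℂ) :
    hsNormSq s (a - b) ≤ 2 * (hsNormSq s a + hsNormSq s b) := by
  simp only [hsNormSq_eq_tsum_enorm, ← ENNReal.tsum_add, ← ENNReal.tsum_mul_left]
  refine ENNReal.tsum_le_tsum fun k => ?_
  calc ENNReal.ofReal (jap k ^ (2 * s)) * ‖a k - b k‖ₑ ^ 2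
      ≤ ENNReal.ofReal (jap k ^ (2 * s)) * (2 * (‖a k‖ₑ ^ 2 + ‖b k‖ₑ ^ 2)) := by
        gcongr
        refine (pow_le_pow_left₀ zero_le enorm_sub_le 2).trans ?_
        simpa only [enorm_eq_nnnorm] using mod_cast add_sq_le (a := ‖a k‖₊) (b := ‖b k‖₊)
    _ = 2 * (ENNReal.ofReal (jap k ^ (2 * s)) * ‖a k‖ₑ ^ 2
          + ENNReal.ofReal (jap k ^ (2 * s)) * ‖b k‖ₑ ^ 2) := by ring

theorem summable_of_hsNormSq_lt_top {s : ℝ} {c : Zn n → ℂ} (hc : hsNormSq s c < ∞) :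
    Summable fun k => jap k ^ (2 * s) * ‖c k‖ ^ 2 :=
  (ENNReal.summable_toReal hc.ne).congr fun k =>
    ENNReal.toReal_ofReal (mul_nonneg (jap_rpow_pos k _).le (sq_nonneg _))

end Sobolev

section Adjoint

variable {n d : ℕ} {w : Zn n → Gr d n → ℝ} {k : Zn n}

/-- The contribution `∑_A w(k,A)² |ĝ(k,A)|²` of the frequency `k` to the data norm, before the
factor `⟨k⟩^{2t}`; the sum runs over all `A`, not only over `Ω_k`. -/
def freqDataNormSq (w : Zn n → Gr d n → ℝ) (g : Gr d n → Zn n → ℂ) (k : Zn n) : ℝ≥0∞ :=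
  ∑' A, (‖w k A‖ₑ * ‖g A k‖ₑ) ^ 2

theorem dataNormSq_eq_tsum_freqDataNormSq (t : ℝ) (w : Zn n → Gr d n → ℝ)
    (g : Gr d n → Zn n → ℂ) :
    dataNormSq t w g = ∑' k, ENNReal.ofReal (jap k ^ (2 * t)) * freqDataNormSq w g k := by
  simp only [dataNormSq, freqDataNormSq, ← ENNReal.tsum_mul_left]
  rw [ENNReal.tsum_comm]
  refine tsum_congr fun k => tsum_congr fun A => ?_
  rw [mul_assoc, ENNReal.ofReal_mul (jap_rpow_pos k _).le, ← sq_abs (w k A), ← mul_pow,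
    ENNReal.ofReal_pow (by positivity), ENNReal.ofReal_mul (abs_nonneg _),
    ← Real.enorm_eq_ofReal_abs, ofReal_norm]

theorem freqDataNormSq_ne_top {t : ℝ} {g : Gr d n → Zn n → ℂ} (hg : dataNormSq t w g ≠ ∞)
    (k : Zn n) : freqDataNormSq w g k ≠ ∞ := by
  rw [dataNormSq_eq_tsum_freqDataNormSq] at hg
  refine fun htop => ENNReal.ne_top_of_tsum_ne_top hg k ?_
  rw [htop, ENNReal.mul_top (ENNReal.ofReal_pos.2 (jap_rpow_pos k _)).ne']

-- A divergent `tsum` is `0`, so positivity of `Wk` already forces convergence.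
theorem summable_sq_of_Wk_pos (hW : 0 < Wk w k) :
    Summable fun A : {A : Gr d n // perp k A} => w k A.1 ^ 2 :=
  not_imp_comm.1 tsum_eq_zero_of_not_summable hW.ne'

theorem tsum_enorm_sq_eq_ofReal_Wk (hW : 0 < Wk w k) :
    ∑' A : {A : Gr d n // perp k A}, ‖w k A.1‖ₑ ^ 2 = ENNReal.ofReal (Wk w k) := by
  rw [Wk, ENNReal.ofReal_tsum_of_nonneg (fun _ => sq_nonneg _) (summable_sq_of_Wk_pos hW)]
  refine tsum_congr fun A => ?_
  rw [← sq_abs, ENNReal.ofReal_pow (abs_nonneg _), ← Real.enorm_eq_ofReal_abs]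

theorem sq_tsum_enorm_radonStar_le (hW : 0 < Wk w k) (g : Gr d n → Zn n → ℂ) :
    (∑' A : {A : Gr d n // perp k A}, ‖(w k A.1 : ℂ) ^ 2 * g A.1 k‖ₑ) ^ 2
      ≤ ENNReal.ofReal (Wk w k) * freqDataNormSq w g k := by
  have term (A : {A : Gr d n // perp k A}) :
      ‖(w k A.1 : ℂ) ^ 2 * g A.1 k‖ₑ = ‖w k A.1‖ₑ * (‖w k A.1‖ₑ * ‖g A.1 k‖ₑ) := by
    rw [enorm_mul, enorm_pow, ← mul_assoc, ← sq, ← ofReal_norm, Complex.norm_real, ofReal_norm]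
  simp only [term]
  refine (sq_tsum_mul_le_tsum_sq_mul_tsum_sq _ _).trans ?_
  rw [tsum_enorm_sq_eq_ofReal_Wk hW]
  gcongr
  exact ENNReal.tsum_comp_le_tsum_of_injective Subtype.val_injective
    fun A => (‖w k A‖ₑ * ‖g A k‖ₑ) ^ 2

theorem enorm_radonStar_sq_le (hW : 0 < Wk w k) (g : Gr d n → Zn n → ℂ) :
    ‖radonStar w g k‖ₑ ^ 2 ≤ ENNReal.ofReal (Wk w k) * freqDataNormSq w g k :=
  (pow_le_pow_left₀ zero_le enorm_tsum_le_tsum_enorm 2).trans (sq_tsum_enorm_radonStar_le hW g)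

theorem summable_radonStar (hW : 0 < Wk w k) {g : Gr d n → Zn n → ℂ}
    (hg : freqDataNormSq w g k ≠ ∞) :
    Summable fun A : {A : Gr d n // perp k A} => (w k A.1 : ℂ) ^ 2 * g A.1 k := by
  have sq_ne_top := ne_top_of_le_ne_top (ENNReal.mul_ne_top ENNReal.ofReal_ne_top hg)
    (sq_tsum_enorm_radonStar_le hW g)
  have tsum_ne_top := (ENNReal.pow_ne_top_iff.1 sq_ne_top).resolve_right two_ne_zero
  exact (tsum_enorm_ne_top_iff_summable_norm.1 tsum_ne_top).of_norm

theorem radonStar_radonC_add (hW : 0 < Wk w k) (f : Zn n → ℂ) {g : Gr d n → Zn n → ℂ}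
    (hg : freqDataNormSq w g k ≠ ∞) :
    radonStar w (fun A k' => radonC A f k' + g A k') k = Wk w k * f k + radonStar w g k := by
  have term (A : {A : Gr d n // perp k A}) :
      (w k A.1 : ℂ) ^ 2 * (radonC A.1 f k + g A.1 k)
        = ((w k A.1 ^ 2 : ℝ) : ℂ) * f k + (w k A.1 : ℂ) ^ 2 * g A.1 k := by
    rw [radonC, if_pos A.2, Complex.ofReal_pow, mul_add]
  have summable_W := (Complex.ofRealCLM.summable (summable_sq_of_Wk_pos hW)).mul_right (f k)
  rw [radonStar, tsum_congr term]
  refine (summable_W.tsum_add (summable_radonStar hW hg)).trans ?_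
  simp only [Complex.ofRealCLM_apply, tsum_mul_right, ← Complex.ofReal_tsum]
  rfl

end Adjoint

theorem tendsto_sqrt_nhdsGT_zero : Tendsto Real.sqrt (𝓝[>] 0) (𝓝[>] 0) :=
  tendsto_nhdsWithin_iff.2 ⟨(Real.continuous_sqrt.tendsto' 0 0 Real.sqrt_zero).mono_left
    nhdsWithin_le_nhds, eventually_mem_nhdsWithin.mono fun _ => Real.sqrt_pos.2⟩

section Tikhonov

variable {n d : ℕ} {w : Zn n → Gr d n → ℝ} {k : Zn n} {α : ℝ}

theorem pSymb_nonneg (hW : 0 ≤ Wk w k) (hα : 0 ≤ α) (s : ℝ) : 0 ≤ pSymb w s α k :=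
  inv_nonneg.2 (add_nonneg hW (mul_nonneg hα (jap_rpow_pos k _).le))

/-- The Fourier multiplier `1 - W_k p_{w,s}^α(k) = α⟨k⟩^{2s} / (W_k + α⟨k⟩^{2s})`, by which the
reconstruction from exact data falls short of the identity. -/
def biasSymb (w : Zn n → Gr d n → ℝ) (s α : ℝ) (k : Zn n) : ℝ :=
  α * jap k ^ (2 * s) * pSymb w s α k

theorem biasSymb_nonneg (hW : 0 ≤ Wk w k) (hα : 0 ≤ α) (s : ℝ) : 0 ≤ biasSymb w s α k :=
  mul_nonneg (mul_nonneg hα (jap_rpow_pos k _).le) (pSymb_nonneg hW hα s)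

theorem biasSymb_le_one (hW : 0 ≤ Wk w k) (hα : 0 ≤ α) (s : ℝ) : biasSymb w s α k ≤ 1 :=
  div_le_one_of_le₀ (le_add_of_nonneg_left hW)
    (add_nonneg hW (mul_nonneg hα (jap_rpow_pos k _).le))

theorem biasSymb_eq_one_sub (hW : 0 < Wk w k) (hα : 0 ≤ α) (s : ℝ) :
    biasSymb w s α k = 1 - pSymb w s α k * Wk w k := by
  have denom_pos : 0 < Wk w k + α * jap k ^ (2 * s) :=
    add_pos_of_pos_of_nonneg hW (mul_nonneg hα (jap_rpow_pos k _).le)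
  unfold biasSymb pSymb
  field_simp
  ring

theorem tendsto_biasSymb_zero (hW : 0 < Wk w k) (s : ℝ) :
    Tendsto (fun α => biasSymb w s α k) (𝓝 0) (𝓝 0) := by
  have denom_ne : Wk w k + 0 * jap k ^ (2 * s) ≠ 0 := by simpa using hW.ne'
  have continuousAt_zero : ContinuousAt (fun α => biasSymb w s α k) 0 := by
    unfold biasSymb pSymb
    fun_prop (disch := assumption)
  simpa [biasSymb] using continuousAt_zero.tendsto

theorem tikhRecon_radonC_add_sub (hW : 0 < Wk w k) (hα : 0 ≤ α) (s : ℝ) (f : Zn n → ℂ)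
    {g : Gr d n → Zn n → ℂ} (hg : freqDataNormSq w g k ≠ ∞) :
    tikhRecon w s α (fun A k' => radonC A f k' + g A k') k - f k
      = tikhRecon w s α g k - biasSymb w s α k * f k := by
  rw [tikhRecon, tikhRecon, radonStar_radonC_add hW f hg, biasSymb_eq_one_sub hW hα s]
  push_cast
  ring

theorem tendsto_hsNormSq_biasSymb_mul (hW : ∀ k, 0 < Wk w k) (s : ℝ) {r : ℝ} {f : Zn n → ℂ}
    (hf : hsNormSq r f < ∞) :
    Tendsto (fun α => hsNormSq r fun k => (biasSymb w s α k : ℂ) * f k) (𝓝[>] 0) (𝓝 0) := by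
  let F : ℝ → Zn n → ℝ := fun α k => jap k ^ (2 * r) * ‖(biasSymb w s α k : ℂ) * f k‖ ^ 2
  have F_nonneg (α : ℝ) (k : Zn n) : 0 ≤ F α k :=
    mul_nonneg (jap_rpow_pos k _).le (sq_nonneg _)
  have F_le {α : ℝ} (hα : 0 < α) (k : Zn n) : F α k ≤ jap k ^ (2 * r) * ‖f k‖ ^ 2 := by
    have jap_nonneg := (jap_rpow_pos k (2 * r)).le
    have bias_nonneg := biasSymb_nonneg (hW k).le hα.le s
    have bias_le_one := biasSymb_le_one (hW k).le hα.le s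
    simp only [F, norm_mul, Complex.norm_real, Real.norm_of_nonneg bias_nonneg]
    gcongr
    exact mul_le_of_le_one_left (norm_nonneg (f k)) bias_le_one
  have F_tendsto (k : Zn n) : Tendsto (F · k) (𝓝[>] 0) (𝓝 0) := by
    have bias := (tendsto_biasSymb_zero (hW k) s).ofReal.mono_left
      (nhdsWithin_le_nhds (s := Set.Ioi 0))
    simpa [F] using ((bias.mul_const (f k)).norm.pow 2).const_mul (jap k ^ (2 * r))
  have summable_f := summable_of_hsNormSq_lt_top hf
  have tsum_tendsto : Tendsto (fun α => ENNReal.ofReal (∑' k, F α k)) (𝓝[>] 0) (𝓝 0) := by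
    simpa using ENNReal.tendsto_ofReal <| tendsto_tsum_of_dominated_convergence summable_f
      F_tendsto <| eventually_mem_nhdsWithin.mono fun α hα k =>
        (Real.norm_of_nonneg (F_nonneg α k)).trans_le (F_le hα k)
  refine tsum_tendsto.congr' <| eventually_mem_nhdsWithin.mono fun α hα => ?_
  exact ENNReal.ofReal_tsum_of_nonneg (F_nonneg α)
    (summable_f.of_nonneg_of_le (F_nonneg α) (F_le hα))

theorem jap_rpow_mul_pSymb_sq_le (hW : 0 ≤ Wk w k) (hα : 0 < α) {r t s : ℝ}
    (hrts : r ≤ 2 * s + t) :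
    jap k ^ (2 * r) * pSymb w s α k ^ 2 ≤ jap k ^ (2 * t) / α ^ 2 := by
  have jap_pos := zero_lt_one.trans_le (one_le_jap k)
  have jap_le : jap k ^ (2 * r) ≤ (jap k ^ (2 * s)) ^ 2 * jap k ^ (2 * t) := by
    rw [← Real.rpow_mul_natCast jap_pos.le, ← Real.rpow_add jap_pos]
    refine Real.rpow_le_rpow_of_exponent_le (one_le_jap k) ?_
    push_cast
    linarith
  have jap_nonneg := (jap_rpow_pos k (2 * t)).le
  rw [le_div_iff₀ (pow_pos hα 2)]
  calc jap k ^ (2 * r) * pSymb w s α k ^ 2 * α ^ 2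
      ≤ (jap k ^ (2 * s)) ^ 2 * jap k ^ (2 * t) * pSymb w s α k ^ 2 * α ^ 2 := by gcongr
    _ = biasSymb w s α k ^ 2 * jap k ^ (2 * t) := by rw [biasSymb]; ring
    _ ≤ jap k ^ (2 * t) := mul_le_of_le_one_left jap_nonneg <|
      pow_le_one₀ (biasSymb_nonneg hW hα.le s) (biasSymb_le_one hW hα.le s)

theorem hsNormSq_tikhRecon_le {M : ℝ} (hW : ∀ k, 0 < Wk w k) (hM : ∀ k, Wk w k ≤ M) (hα : 0 < α)
    {r t s : ℝ} (hrts : r ≤ 2 * s + t) (g : Gr d n → Zn n → ℂ) :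
    hsNormSq r (tikhRecon w s α g) ≤ ENNReal.ofReal (M / α ^ 2) * dataNormSq t w g := by
  rw [hsNormSq_eq_tsum_enorm, dataNormSq_eq_tsum_freqDataNormSq, ← ENNReal.tsum_mul_left]
  refine ENNReal.tsum_le_tsum fun k => ?_
  have enorm_pSymb : ‖(pSymb w s α k : ℂ)‖ₑ ^ 2 = ENNReal.ofReal (pSymb w s α k ^ 2) := by
    have pSymb_nn := pSymb_nonneg (hW k).le hα.le s
    rw [← ofReal_norm, Complex.norm_real, Real.norm_of_nonneg pSymb_nn, ENNReal.ofReal_pow pSymb_nn]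
  calc ENNReal.ofReal (jap k ^ (2 * r)) * ‖tikhRecon w s α g k‖ₑ ^ 2
      = ENNReal.ofReal (jap k ^ (2 * r) * pSymb w s α k ^ 2) * ‖radonStar w g k‖ₑ ^ 2 := by
        rw [tikhRecon, enorm_mul, mul_pow, enorm_pSymb, ENNReal.ofReal_mul (jap_rpow_pos k _).le,
          mul_assoc]
    _ ≤ ENNReal.ofReal (jap k ^ (2 * t) / α ^ 2) * (ENNReal.ofReal M * freqDataNormSq w g k) := by
        gcongr
        · exact jap_rpow_mul_pSymb_sq_le (hW k).le hα hrts
        · refine (enorm_radonStar_sq_le (hW k) g).trans ?_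
          gcongr
          exact hM k
    _ = ENNReal.ofReal (M / α ^ 2)
          * (ENNReal.ofReal (jap k ^ (2 * t)) * freqDataNormSq w g k) := by
        have jap_nonneg := (jap_rpow_pos k (2 * t)).le
        rw [← mul_assoc, ← mul_assoc, ← ENNReal.ofReal_mul (by positivity),
          ← ENNReal.ofReal_mul' jap_nonneg]
        congr 2
        ring

theorem hsNormSq_tikhRecon_radonC_add_sub_le {M : ℝ} (hW : ∀ k, 0 < Wk w k)
    (hM : ∀ k, Wk w k ≤ M) (hα : 0 < α) {r t s : ℝ} (hrts : r ≤ 2 * s + t) (f : Zn n → ℂ)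
    {g : Gr d n → Zn n → ℂ} (hg : dataNormSq t w g ≠ ∞) :
    hsNormSq r (fun k => tikhRecon w s α (fun A k' => radonC A f k' + g A k') k - f k)
      ≤ 2 * (ENNReal.ofReal (M / α ^ 2) * dataNormSq t w g
        + hsNormSq r fun k => (biasSymb w s α k : ℂ) * f k) := by
  have split : (fun k => tikhRecon w s α (fun A k' => radonC A f k' + g A k') k - f k)
      = tikhRecon w s α g - fun k => (biasSymb w s α k : ℂ) * f k :=
    funext fun k => tikhRecon_radonC_add_sub (hW k) hα.le s f (freqDataNormSq_ne_top hg k)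
  rw [split]
  refine (hsNormSq_sub_le r _ _).trans ?_
  gcongr
  exact hsNormSq_tikhRecon_le hW hM hα hrts g

theorem dataNormSq_le_sq_of_dataNorm_le {t : ℝ} {g : Gr d n → Zn n → ℂ} {b : ℝ≥0∞}
    (hg : dataNorm t w g ≤ b) : dataNormSq t w g ≤ b ^ 2 := by
  calc dataNormSq t w g = dataNorm t w g ^ 2 := by
        rw [dataNorm, ← ENNReal.rpow_two, ← ENNReal.rpow_mul]
        norm_num
    _ ≤ b ^ 2 := by gcongr

theorem iSup_hsNorm_tikhRecon_radonC_add_sub_le {M : ℝ} (hW : ∀ k, 0 < Wk w k)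
    (hM : ∀ k, Wk w k ≤ M) (hα : 0 < α) {r t s : ℝ} (hrts : r ≤ 2 * s + t) (f : Zn n → ℂ)
    {ε : ℝ} (hε : 0 ≤ ε) :
    ⨆ (g : Gr d n → Zn n → ℂ) (_ : dataNorm t w g ≤ ENNReal.ofReal ε),
        hsNorm r (fun k => tikhRecon w s α (fun A k' => radonC A f k' + g A k') k - f k)
      ≤ (2 * (ENNReal.ofReal (M * (ε / α) ^ 2)
        + hsNormSq r fun k => (biasSymb w s α k : ℂ) * f k)) ^ (1 / 2 : ℝ) := by
  refine iSup₂_le fun g hg => ENNReal.rpow_le_rpow ?_ (by norm_num)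
  have data_le := dataNormSq_le_sq_of_dataNorm_le hg
  rw [← ENNReal.ofReal_pow hε] at data_le
  refine (hsNormSq_tikhRecon_radonC_add_sub_le hW hM hα hrts f
    (ne_top_of_le_ne_top ENNReal.ofReal_ne_top data_le)).trans ?_
  gcongr
  calc ENNReal.ofReal (M / α ^ 2) * dataNormSq t w g
      ≤ ENNReal.ofReal (M / α ^ 2) * ENNReal.ofReal (ε ^ 2) := by gcongr
    _ = ENNReal.ofReal (M * (ε / α) ^ 2) := by
        rw [← ENNReal.ofReal_mul' (sq_nonneg ε), div_pow, div_mul_comm, mul_comm]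

theorem statement8_general {M : ℝ} (hW : ∀ k, 0 < Wk w k) (hM : ∀ k, Wk w k ≤ M) {r t s : ℝ}
    (hrts : r ≤ 2 * s + t) {f : Zn n → ℂ} (hf : hsNormSq r f < ∞) {α : ℝ → ℝ}
    (hα : Tendsto α (𝓝[>] 0) (𝓝[>] 0)) (hεα : Tendsto (fun ε => ε / α ε) (𝓝[>] 0) (𝓝 0)) :
    Tendsto
      (fun ε : ℝ =>
        ⨆ (g : Gr d n → Zn n → ℂ) (_ : dataNorm t w g ≤ ENNReal.ofReal ε),
          hsNorm r (fun k => tikhRecon w s (α ε) (fun A k' => radonC A f k' + g A k') k - f k))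
      (𝓝[>] 0) (𝓝 0) := by
  have noise : Tendsto (fun ε => ENNReal.ofReal (M * (ε / α ε) ^ 2)) (𝓝[>] 0) (𝓝 0) := by
    simpa using ENNReal.tendsto_ofReal ((hεα.pow 2).const_mul M)
  have bias := (tendsto_hsNormSq_biasSymb_mul hW s hf).comp hα
  have bound : Tendsto (fun ε => (2 * (ENNReal.ofReal (M * (ε / α ε) ^ 2)
      + hsNormSq r fun k => (biasSymb w s (α ε) k : ℂ) * f k)) ^ (1 / 2 : ℝ)) (𝓝[>] 0) (𝓝 0) := by
    simpa using (ENNReal.Tendsto.const_mul (a := 2) (noise.add bias)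
      (Or.inr ENNReal.ofNat_ne_top)).ennrpow_const (1 / 2 : ℝ)
  refine tendsto_of_tendsto_of_tendsto_of_le_of_le' tendsto_const_nhds bound
    (Eventually.of_forall fun _ => zero_le) ?_
  filter_upwards [self_mem_nhdsWithin, hα self_mem_nhdsWithin] with ε hε hαε
  exact iSup_hsNorm_tikhRecon_radonC_add_sub_le hW hM hαε hrts f (le_of_lt hε)

end Tikhonov

/-- Regularization strategy.
For `2s + t ≥ r`, `δ ≥ 0`, `s > 0` and `f ∈ H^{r+δ}(𝕋ⁿ)`, with the choice
`α(ε) = √ε` the reconstruction `P_{w,s}^{α(ε)} R_d^*` is a regularization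
strategy:
`sup { ‖P_{w,s}^{α(ε)} R_d^*(R_d f + g) − f‖_{H^r} : ‖g‖_{L_t^{2,2}} ≤ ε } → 0`
as `ε → 0⁺`. -/
theorem statement8 {n d : ℕ} (hn : 2 ≤ n) (hd1 : 1 ≤ d) (hd2 : d ≤ n - 1)
    (w : Zn n → Gr d n → ℝ) (hw : IsWeight w) (cw Cw : ℝ) (hcw : 0 < cw) (hCw : 0 < Cw)
    (hWsum : ∀ k : Zn n, Summable (fun A : {A : Gr d n // perp k A} => (w k A.1) ^ 2))
    (hWlb : ∀ k : Zn n, cw ^ 2 ≤ Wk w k) (hWub : ∀ k : Zn n, Wk w k ≤ Cw ^ 2)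
    (r t s δ : ℝ) (hrts : r ≤ 2*s + t) (hδ : 0 ≤ δ) (hs : 0 < s)
    (f : PDist n) (hf : hsNormSq (r + δ) f.coef < ∞) :
    Filter.Tendsto
      (fun ε : ℝ =>
        ⨆ (g : Gr d n → PDist n)
          (_ : dataNorm t w (fun A => (g A).coef) ≤ ENNReal.ofReal ε),
          hsNorm r (fun k : Zn n =>
            tikhRecon w s (Real.sqrt ε)
              (fun A k' => radonC A f.coef k' + (g A).coef k') k - f.coef k))
      (nhdsWithin 0 (Set.Ioi (0:ℝ))) (nhds 0) := by
  have hW (k : Zn n) : 0 < Wk w k := (pow_pos hcw 2).trans_le (hWlb k)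
  have hfr : hsNormSq r f.coef < ∞ := (hsNormSq_mono (le_add_of_nonneg_right hδ) _).trans_lt hf
  have strategy := statement8_general hW hWub hrts hfr tendsto_sqrt_nhdsGT_zero <| by
    simpa only [Real.div_sqrt] using tendsto_sqrt_nhdsGT_zero.mono_right nhdsWithin_le_nhds
  exact tendsto_of_tendsto_of_tendsto_of_le_of_le tendsto_const_nhds strategy (fun _ => zero_le)
    fun _ => iSup₂_le fun g hg => le_iSup₂_of_le (fun A => (g A).coef) hg le_rfl
end
end

section
/- Let n ≥ 2 and 1 ≤ d ≤ n−1 be integers, s ∈ ℝ, and let w be a weight such that there exists C_w > 0 with Σ_{A∈Ω_k} w(k,A)² ≤ C_w² for every k ∈ ℤ^n. Then the d-plane Radon transform R_d : H^s(𝕋^n) → L_s^{2,2}(X_{d,n};w) is C_w-Lipschitz: ‖R_d f‖_{L_s^{2,2}(X_{d,n};w)} ≤ C_w ‖f‖_{H^s(𝕋^n)} for all f ∈ H^s(𝕋^n). -/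
/-!
Setting: the flat torus 𝕋ⁿ = ℝⁿ/ℤⁿ and its d-plane Radon transform.

* Periodic distributions 𝒯' are modeled, via the structure theorem, by their
  Fourier coefficient sequences `ℤⁿ → ℂ` of at most polynomial growth (`PDist`).
* `Gr d n` is the Grassmannian of d-dimensional subspaces of ℚⁿ.
* The d-plane Radon transform is encoded on the Fourier side by the Fourier
  slice identity `(R_{d,A} f)^(k) = f̂(k)` if `k ⊥ A` and `0` otherwise (`radonC`).
* `hsNormSq s c = Σ_k ⟨k⟩^{2s} |c k|²` is the squared H^s(𝕋ⁿ) norm (in ℝ≥0∞),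
  `dataNormSq s w g = Σ_A Σ_k ⟨k⟩^{2s} w(k,A)² |ĝ(k,A)|²` is the squared
  L_s^{2,2}(X_{d,n}; w) norm, `hsNorm`/`dataNorm` are their square roots.
* `Wk w k = Σ_{A ∈ Ω_k} w(k,A)²` and `radonStar` is the adjoint
  `(R_d^* g)^(k) = Σ_{A ∈ Ω_k} w(k,A)² ĝ(k,A)`.
-/

open scoped ENNReal BigOperators
open MeasureTheory Classical Filter

noncomputable section

section

variable {d n : ℕ} {w : Zn n → Gr d n → ℝ}

theorem jap_rpow_mul_norm_sq_nonneg (s : ℝ) (c : Zn n → ℂ) (k : Zn n) :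
    0 ≤ jap k ^ (2 * s) * ‖c k‖ ^ 2 :=
  mul_nonneg (Real.rpow_nonneg (Real.sqrt_nonneg _) _) (sq_nonneg _)

theorem ofReal_mul_norm_radonC_sq_eq_indicator (s : ℝ) (c : Zn n → ℂ) (k : Zn n)
    (A : Gr d n) :
    ENNReal.ofReal (jap k ^ (2 * s) * w k A ^ 2 * ‖radonC A c k‖ ^ 2) =
      {A : Gr d n | perp k A}.indicator
        (fun A => ENNReal.ofReal (w k A ^ 2 * (jap k ^ (2 * s) * ‖c k‖ ^ 2))) A := by
  by_cases hA : perp k A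
  · simp [radonC, hA, mul_comm, mul_left_comm]
  · simp [radonC, hA]

theorem tsum_ofReal_mul_norm_radonC_sq (s : ℝ) (c : Zn n → ℂ) {k : Zn n}
    (hsum : Summable fun A : {A : Gr d n // perp k A} => w k A.1 ^ 2) :
    ∑' A : Gr d n, ENNReal.ofReal (jap k ^ (2 * s) * w k A ^ 2 * ‖radonC A c k‖ ^ 2) =
      ENNReal.ofReal (Wk w k * (jap k ^ (2 * s) * ‖c k‖ ^ 2)) := by
  set m : ℝ := jap k ^ (2 * s) * ‖c k‖ ^ 2
  have hm : 0 ≤ m := jap_rpow_mul_norm_sq_nonneg s c k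
  calc ∑' A : Gr d n, ENNReal.ofReal (jap k ^ (2 * s) * w k A ^ 2 * ‖radonC A c k‖ ^ 2)
      = ∑' A : Gr d n, {A : Gr d n | perp k A}.indicator
          (fun A => ENNReal.ofReal (w k A ^ 2 * m)) A :=
        tsum_congr (ofReal_mul_norm_radonC_sq_eq_indicator s c k)
    _ = ∑' A : {A : Gr d n // perp k A}, ENNReal.ofReal (w k A.1 ^ 2 * m) :=
        (tsum_subtype {A : Gr d n | perp k A} _).symm
    _ = ENNReal.ofReal (∑' A : {A : Gr d n // perp k A}, w k A.1 ^ 2 * m) :=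
        (ENNReal.ofReal_tsum_of_nonneg (fun A => mul_nonneg (sq_nonneg _) hm)
          (hsum.mul_right m)).symm
    _ = ENNReal.ofReal (Wk w k * m) := by rw [tsum_mul_right, Wk]

-- By Tonelli: `R_{d,A}` keeps or kills each Fourier mode, so mode `k` gets total weight `W_k`.
theorem dataNormSq_radonC (s : ℝ) (c : Zn n → ℂ)
    (hsum : ∀ k : Zn n, Summable fun A : {A : Gr d n // perp k A} => w k A.1 ^ 2) :
    dataNormSq s w (fun A => radonC A c) =
      ∑' k : Zn n, ENNReal.ofReal (Wk w k * (jap k ^ (2 * s) * ‖c k‖ ^ 2)) := by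
  rw [dataNormSq, ENNReal.tsum_comm]
  exact tsum_congr fun k => tsum_ofReal_mul_norm_radonC_sq s c (hsum k)

theorem dataNormSq_radonC_le (s : ℝ) (c : Zn n → ℂ) {M : ℝ}
    (hsum : ∀ k : Zn n, Summable fun A : {A : Gr d n // perp k A} => w k A.1 ^ 2)
    (hle : ∀ k : Zn n, Wk w k ≤ M) :
    dataNormSq s w (fun A => radonC A c) ≤ ENNReal.ofReal M * hsNormSq s c := by
  rw [dataNormSq_radonC s c hsum, hsNormSq, ← ENNReal.tsum_mul_left]
  refine ENNReal.tsum_le_tsum fun k => ?_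
  have hm := jap_rpow_mul_norm_sq_nonneg s c k
  rw [← ENNReal.ofReal_mul' hm]
  exact ENNReal.ofReal_le_ofReal (mul_le_mul_of_nonneg_right (hle k) hm)

end

theorem statement17_general {d n : ℕ} (s : ℝ) {w : Zn n → Gr d n → ℝ} {Cw : ℝ} (hCw : 0 ≤ Cw)
    (hWsum : ∀ k : Zn n, Summable fun A : {A : Gr d n // perp k A} => w k A.1 ^ 2)
    (hWle : ∀ k : Zn n, Wk w k ≤ Cw ^ 2) (c : Zn n → ℂ) :
    dataNorm s w (fun A => radonC A c) ≤ ENNReal.ofReal Cw * hsNorm s c :=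
  calc dataNorm s w (fun A => radonC A c)
      ≤ (ENNReal.ofReal (Cw ^ 2) * hsNormSq s c) ^ (1 / 2 : ℝ) :=
        ENNReal.rpow_le_rpow (dataNormSq_radonC_le s c hWsum hWle) one_half_pos.le
    _ = ENNReal.ofReal (Cw ^ 2) ^ (1 / 2 : ℝ) * hsNorm s c :=
        ENNReal.mul_rpow_of_nonneg _ _ one_half_pos.le
    _ = ENNReal.ofReal Cw * hsNorm s c := by
        rw [ENNReal.ofReal_rpow_of_nonneg (sq_nonneg Cw) one_half_pos.le, ← Real.sqrt_eq_rpow,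
          Real.sqrt_sq hCw]

/-- `R_d : H^s(𝕋ⁿ) → L_s^{2,2}(X_{d,n};w)` is
`C_w`-Lipschitz. If `Σ_{A∈Ω_k} w(k,A)² ≤ C_w²` for all `k`, then
`‖R_d f‖_{L_s^{2,2}(X_{d,n};w)} ≤ C_w ‖f‖_{H^s(𝕋ⁿ)}` for all `f ∈ H^s(𝕋ⁿ)`. -/
theorem statement17 {n d : ℕ} (hn : 2 ≤ n) (hd1 : 1 ≤ d) (hd2 : d ≤ n - 1)
    (s : ℝ) (w : Zn n → Gr d n → ℝ) (hw : IsWeight w) (Cw : ℝ) (hCw : 0 < Cw)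
    (hWsum : ∀ k : Zn n, Summable (fun A : {A : Gr d n // perp k A} => (w k A.1) ^ 2))
    (hWle : ∀ k : Zn n, Wk w k ≤ Cw ^ 2) :
    ∀ f : PDist n, hsNormSq s f.coef < ∞ →
      dataNorm s w (fun A => radonC A f.coef) ≤ ENNReal.ofReal Cw * hsNorm s f.coef := by
  intro f _
  exact statement17_general s hCw.le hWsum hWle f.coef
end
end
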